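/- Let I be a finite set, theta : I -> R, and x1, x2 in I with x1 != x2 such that theta(x1) > theta(x2) and theta(x2) >= theta(x) for all x != x1 (x2 attains the maximum of theta over I \ {x1}). Let beta_2 > 0, beta_W > 0, sigmatilde > 0, and let W be a real number with theta(x2) < W <= (beta_2/beta_W) * (theta(x1) - theta(x2)) + theta(x1). Define theta' : I -> R by theta'(x) = theta(x) for x != x2 and theta'(x2) = (beta_2 * theta(x2) + beta_W * W) / (beta_2 + beta_W). Then sigmatilde * f(-|theta(x1) - max_{x != x1} theta(x)| / sigmatilde) < sigmatilde * f(-|theta'(x1) - max_{x != x1} theta'(x)| / sigmatilde), where f(zeta) = zeta * Phi(zeta) + phi(zeta) with Phi the standard normal cumulative distribution function and phi the standard normal density. -/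

import Mathlib

/-- The standard normal density `φ(ζ) = exp(-ζ²/2)/√(2π)`. -/
noncomputable def stdGaussPDF (ζ : ℝ) : ℝ :=
  (1 / Real.sqrt (2 * Real.pi)) * Real.exp (-ζ ^ 2 / 2)

/-- The standard normal cumulative distribution function `Φ(ζ) = ∫_{-∞}^ζ φ`. -/
noncomputable def stdGaussCDF (ζ : ℝ) : ℝ := ∫ t in Set.Iic ζ, stdGaussPDF t

/-- `f(ζ) = ζ·Φ(ζ) + φ(ζ)`, the function appearing in the closed form of the
knowledge-gradient value. -/
noncomputable def fKG (ζ : ℝ) : ℝ := ζ * stdGaussCDF ζ + stdGaussPDF ζ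

/-! Since `φ' = -ζφ` and `Φ' = φ`, the function `f(ζ) = ζΦ(ζ) + φ(ζ)` has derivative `Φ > 0`, so the
knowledge-gradient value of `x₁` is strictly decreasing in the gap between `θ(x₁)` and the best
competing mean. The posterior mean of `x₂` is a weighted average of `θ(x₂)` and `W`: the lower bound
on `W` puts it above `θ(x₂)`, and the upper bound keeps it at most `θ(x₁)`. As `x₂` is the best
competitor both before and after the measurement, the gap shrinks. -/

section Gaussian

open Filter MeasureTheory ProbabilityTheory Set
open scoped NNReal Topology

theorem hasDerivAt_integral_Iic {E : Type*} [NormedAddCommGroup E] [NormedSpace ℝ E]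
    [CompleteSpace E] {f : ℝ → E} {a b : ℝ} (hab : a < b) (hf : IntegrableOn f (Iic b))
    (hfa : ContinuousAt f a) : HasDerivAt (fun x => ∫ t in Iic x, f t) (f a) a := by
  have hmeas : StronglyMeasurableAtFilter f (𝓝 a) :=
    ⟨Iic b, Iic_mem_nhds hab, hf.aestronglyMeasurable⟩
  have hsplit : (fun x => ∫ t in Iic x, f t) =ᶠ[𝓝 a]
      fun x => (∫ t in Iic a, f t) + ∫ t in a..x, f t := by
    filter_upwards [Iic_mem_nhds hab] with x hx
    rw [← intervalIntegral.integral_Iic_sub_Iic (hf.mono_set (Iic_subset_Iic.2 hab.le))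
      (hf.mono_set (Iic_subset_Iic.2 hx)), add_sub_cancel]
  exact ((intervalIntegral.integral_hasDerivAt_right .refl hmeas hfa).const_add
    _).congr_of_eventuallyEq hsplit

theorem hasDerivAt_gaussianPDFReal (μ : ℝ) (v : ℝ≥0) (x : ℝ) :
    HasDerivAt (gaussianPDFReal μ v) (-((x - μ) / v) * gaussianPDFReal μ v x) x := by
  have hexponent : HasDerivAt (fun y => -(y - μ) ^ 2 / (2 * v)) (-((x - μ) / v)) x := by
    refine ((((hasDerivAt_id' x).sub_const μ).pow 2).neg.div_const (2 * (v : ℝ))).congr_deriv ?_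
    norm_num [neg_div, mul_div_mul_left]
  refine (hexponent.exp.const_mul (√(2 * Real.pi * v))⁻¹).congr_deriv ?_
  rw [gaussianPDFReal]
  ring

theorem stdGaussPDF_eq_gaussianPDFReal : stdGaussPDF = gaussianPDFReal 0 1 := by
  ext ζ
  simp [stdGaussPDF, gaussianPDFReal]

theorem stdGaussPDF_pos (ζ : ℝ) : 0 < stdGaussPDF ζ :=
  stdGaussPDF_eq_gaussianPDFReal ▸ gaussianPDFReal_pos 0 1 ζ one_ne_zero

theorem integrable_stdGaussPDF : Integrable stdGaussPDF :=
  stdGaussPDF_eq_gaussianPDFReal ▸ integrable_gaussianPDFReal 0 1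

theorem hasDerivAt_stdGaussPDF (ζ : ℝ) : HasDerivAt stdGaussPDF (-ζ * stdGaussPDF ζ) ζ := by
  simpa [stdGaussPDF_eq_gaussianPDFReal] using hasDerivAt_gaussianPDFReal 0 1 ζ

theorem stdGaussCDF_pos (ζ : ℝ) : 0 < stdGaussCDF ζ := by
  have hsupport : Function.support stdGaussPDF = univ :=
    Function.support_eq_univ fun t => (stdGaussPDF_pos t).ne'
  rw [stdGaussCDF, setIntegral_pos_iff_support_of_nonneg_ae
    (.of_forall fun t => (stdGaussPDF_pos t).le) integrable_stdGaussPDF.integrableOn, hsupport]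
  simp

theorem hasDerivAt_stdGaussCDF (ζ : ℝ) : HasDerivAt stdGaussCDF (stdGaussPDF ζ) ζ :=
  hasDerivAt_integral_Iic (lt_add_one ζ) integrable_stdGaussPDF.integrableOn
    (hasDerivAt_stdGaussPDF ζ).continuousAt

end Gaussian

section KnowledgeGradient

theorem hasDerivAt_fKG (ζ : ℝ) : HasDerivAt fKG (stdGaussCDF ζ) ζ := by
  refine (((hasDerivAt_id' ζ).mul (hasDerivAt_stdGaussCDF ζ)).add
    (hasDerivAt_stdGaussPDF ζ)).congr_deriv ?_
  ring

theorem strictMono_fKG : StrictMono fKG :=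
  strictMono_of_hasDerivAt_pos hasDerivAt_fKG stdGaussCDF_pos

/-- The knowledge-gradient value of an alternative with mean `a`, where `c` is the best mean among
the other alternatives and `σ` is the paper's `σ̃`. -/
noncomputable def kgValue (σ a c : ℝ) : ℝ := σ * fKG (-|a - c| / σ)

theorem kgValue_lt_kgValue_iff {σ a c a' c' : ℝ} (hσ : 0 < σ) :
    kgValue σ a c < kgValue σ a' c' ↔ |a' - c'| < |a - c| := by
  rw [kgValue, kgValue, mul_lt_mul_iff_right₀ hσ, strictMono_fKG.lt_iff_lt,
    div_lt_div_iff_of_pos_right hσ, neg_lt_neg_iff]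

end KnowledgeGradient

section PosteriorMean

variable {K : Type*} [Field K]

/-- The posterior mean of a normal belief with mean `a` and precision `β`, after observing `w` with
measurement precision `βW`. -/
def posteriorMean (β a βW w : K) : K := (β * a + βW * w) / (β + βW)

variable [LinearOrder K] [IsStrictOrderedRing K] {β a βW w : K}

theorem lt_posteriorMean_iff (hβW : 0 < βW) (hβ : 0 < β + βW) :
    a < posteriorMean β a βW w ↔ a < w := by
  rw [posteriorMean, lt_div_iff₀ hβ, mul_comm, add_mul, add_lt_add_iff_left,
    mul_lt_mul_iff_right₀ hβW]

theorem posteriorMean_le_iff (hβW : 0 < βW) (hβ : 0 < β + βW) {c : K} :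
    posteriorMean β a βW w ≤ c ↔ w ≤ β / βW * (c - a) + c := by
  have hscale : βW * (β / βW * (c - a) + c) = c * (β + βW) - β * a := by
    field_simp
    ring
  rw [posteriorMean, div_le_iff₀ hβ, ← mul_le_mul_iff_right₀ (b := w) hβW, hscale,
    le_sub_iff_add_le']

end PosteriorMean

section BestCompetitor

variable {ι α : Type*} {s : Finset ι} {f : ι → α} {i j : ι} {m : α}

theorem sup'_eq_of_forall_le [SemilatticeSup α] (hj : j ∈ s) (hmax : ∀ k ∈ s, f k ≤ f j) :
    s.sup' ⟨j, hj⟩ f = f j :=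
  le_antisymm (Finset.sup'_le _ _ hmax) (Finset.le_sup' f hj)

theorem sup'_update_of_forall_le [SemilatticeSup α] [DecidableEq ι] (hj : j ∈ s)
    (hmax : ∀ k ∈ s, k ≠ j → f k ≤ m) : s.sup' ⟨j, hj⟩ (Function.update f j m) = m := by
  have hupdate : ∀ k ∈ s, Function.update f j m k ≤ Function.update f j m j := by
    intro k hk
    obtain rfl | hkj := eq_or_ne k j
    · exact le_rfl
    · simpa [hkj] using hmax k hk hkj
  rw [sup'_eq_of_forall_le hj hupdate, Function.update_self]

theorem abs_sub_sup'_update_lt [AddCommGroup α] [LinearOrder α] [IsOrderedAddMonoid α]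
    [DecidableEq ι] (hij : i ≠ j) (hj : j ∈ s) (hmax : ∀ k ∈ s, f k ≤ f j)
    (hjm : f j < m) (hmi : m ≤ f i) :
    |Function.update f j m i - s.sup' ⟨j, hj⟩ (Function.update f j m)| <
      |f i - s.sup' ⟨j, hj⟩ f| := by
  rw [sup'_update_of_forall_le hj fun k hk _ => (hmax k hk).trans hjm.le,
    sup'_eq_of_forall_le hj hmax, Function.update_of_ne hij, abs_of_nonneg (sub_nonneg.2 hmi),
    abs_of_pos (sub_pos.2 (hjm.trans_le hmi))]
  exact sub_lt_sub_left hjm _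

end BestCompetitor

/-- Failure of adaptive submodularity: if `x₂` attains the maximum of `θ` over
`I \ {x₁}`, `θ(x₁) > θ(x₂)`, and the observation `W` of alternative `x₂`
satisfies `θ(x₂) < W ≤ (β₂/β_W)(θ(x₁) - θ(x₂)) + θ(x₁)`, then after the
Bayesian update `θ'(x₂) = (β₂θ(x₂) + β_W·W)/(β₂ + β_W)` the knowledge-gradient
value `σ̃·f(-|θ(x₁) - max_{x ≠ x₁} θ(x)|/σ̃)` of alternative `x₁` strictly
increases. -/
theorem kg_value_strictly_increases {I : Type*} [Fintype I] [DecidableEq I]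
    (θ : I → ℝ) (x1 x2 : I) (hne : x1 ≠ x2)
    (h12 : θ x2 < θ x1) (hmax : ∀ x, x ≠ x1 → θ x ≤ θ x2)
    (β2 βW st W : ℝ) (hβ2 : 0 < β2) (hβW : 0 < βW) (hst : 0 < st)
    (hW1 : θ x2 < W) (hW2 : W ≤ β2 / βW * (θ x1 - θ x2) + θ x1) :
    st * fKG (-|θ x1 -
        (Finset.univ.erase x1).sup'
          ⟨x2, Finset.mem_erase.mpr ⟨Ne.symm hne, Finset.mem_univ x2⟩⟩ θ| / st) <
    st * fKG (-|Function.update θ x2 ((β2 * θ x2 + βW * W) / (β2 + βW)) x1 -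
        (Finset.univ.erase x1).sup'
          ⟨x2, Finset.mem_erase.mpr ⟨Ne.symm hne, Finset.mem_univ x2⟩⟩
          (Function.update θ x2 ((β2 * θ x2 + βW * W) / (β2 + βW)))| / st) := by
  have hβ : 0 < β2 + βW := add_pos hβ2 hβW
  have hlt : θ x2 < posteriorMean β2 (θ x2) βW W := (lt_posteriorMean_iff hβW hβ).2 hW1
  have hle : posteriorMean β2 (θ x2) βW W ≤ θ x1 := (posteriorMean_le_iff hβW hβ).2 hW2
  have hx2 : x2 ∈ Finset.univ.erase x1 := Finset.mem_erase.2 ⟨hne.symm, Finset.mem_univ x2⟩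
  exact (kgValue_lt_kgValue_iff hst).2 <|
    abs_sub_sup'_update_lt hne hx2 (fun x hx => hmax x (Finset.ne_of_mem_erase hx)) hlt hle
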